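/- arXiv:2210.04079 — 2 statements merged into one kernel-verified Lean document; each statement's English description precedes it below -/
import Mathlib

section
/- Let v be a random vector in ℝ^p and h a random variable with h > 0 almost surely, such that the matrices E[v vᵀ], E[h v vᵀ] and E[h² v vᵀ] exist (Bochner integrable) and E[v vᵀ] and E[h v vᵀ] are positive definite. Then E[v vᵀ]⁻¹ ≤ E[h v vᵀ]⁻¹ E[h² v vᵀ] E[h v vᵀ]⁻¹ in the Loewner ordering. -/
open MeasureTheory ProbabilityTheory Filter Matrix

noncomputable section

lemma aux_bilin {Ω : Type*} [MeasurableSpace Ω] (μ : Measure Ω)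
    {p : ℕ} (v : Ω → Fin p → ℝ) (w : Ω → ℝ)
    (hint : ∀ i j, Integrable (fun ω => w ω * (v ω i * v ω j)) μ) (y z : Fin p → ℝ) :
    Integrable (fun ω => w ω * ((y ⬝ᵥ v ω) * (z ⬝ᵥ v ω))) μ ∧
    y ⬝ᵥ ((Matrix.of fun i j => ∫ ω, w ω * (v ω i * v ω j) ∂μ) *ᵥ z) =
      ∫ ω, w ω * ((y ⬝ᵥ v ω) * (z ⬝ᵥ v ω)) ∂μ := by
  have e : (fun ω => w ω * ((y ⬝ᵥ v ω) * (z ⬝ᵥ v ω))) =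
      fun ω => ∑ i, ∑ j, (y i * z j) * (w ω * (v ω i * v ω j)) := by
    funext ω
    simp only [dotProduct, Finset.sum_mul_sum]
    simp only [Finset.mul_sum]
    refine Finset.sum_congr rfl fun i _ => Finset.sum_congr rfl fun j _ => ?_
    ring
  have hi : ∀ i j, Integrable (fun ω => (y i * z j) * (w ω * (v ω i * v ω j))) μ :=
    fun i j => (hint i j).const_mul _
  rw [e]
  refine ⟨integrable_finsetSum _ fun i _ => integrable_finsetSum _ fun j _ => hi i j, ?_⟩
  rw [integral_finsetSum _ fun i _ => integrable_finsetSum _ fun j _ => hi i j]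
  simp only [dotProduct, mulVec, Matrix.of_apply, Finset.mul_sum]
  refine Finset.sum_congr rfl fun i _ => ?_
  rw [integral_finsetSum _ fun j _ => hi i j]
  refine Finset.sum_congr rfl fun j _ => ?_
  rw [integral_const_mul]
  ring

/-- if `h > 0` a.s. and `B := E[v vᵀ]`, `A := E[h v vᵀ]` are positive
definite while `D := E[h² v vᵀ]` exists (expectations taken entrywise), then
`B⁻¹ ≤ A⁻¹ D A⁻¹` in the Loewner ordering, i.e. `A⁻¹ D A⁻¹ - B⁻¹` is PSD. -/
theorem exp_inv_le_inv_exp_sq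
    {Ω : Type*} [MeasurableSpace Ω] (μ : Measure Ω) [IsProbabilityMeasure μ]
    {p : ℕ} (v : Ω → Fin p → ℝ) (h : Ω → ℝ)
    (hv : Measurable v) (hh : Measurable h)
    (hpos : ∀ᵐ ω ∂μ, 0 < h ω)
    (hBint : ∀ i j, Integrable (fun ω => v ω i * v ω j) μ)
    (hAint : ∀ i j, Integrable (fun ω => h ω * (v ω i * v ω j)) μ)
    (hDint : ∀ i j, Integrable (fun ω => h ω ^ 2 * (v ω i * v ω j)) μ)
    (A B D : Matrix (Fin p) (Fin p) ℝ)
    (hA : A = Matrix.of fun i j => ∫ ω, h ω * (v ω i * v ω j) ∂μ)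
    (hB : B = Matrix.of fun i j => ∫ ω, v ω i * v ω j ∂μ)
    (hD : D = Matrix.of fun i j => ∫ ω, h ω ^ 2 * (v ω i * v ω j) ∂μ)
    (hApd : A.PosDef) (hBpd : B.PosDef) :
    (A⁻¹ * D * A⁻¹ - B⁻¹).PosSemidef := by
  have hDh : D.IsHermitian := by
    ext i j
    simp only [hD, conjTranspose_apply, Matrix.of_apply, star_trivial, mul_comm]
  have hAi : A⁻¹.IsHermitian := hApd.isHermitian.inv
  have hBi : B⁻¹.IsHermitian := hBpd.isHermitian.inv
  have hAu : IsUnit A.det := (Matrix.isUnit_iff_isUnit_det A).1 hApd.isUnit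
  have hBu : IsUnit B.det := (Matrix.isUnit_iff_isUnit_det B).1 hBpd.isUnit
  have sA : A⁻¹ᵀ = A⁻¹ := by simpa [IsHermitian, conjTranspose_eq_transpose_of_trivial] using hAi
  have sB : B⁻¹ᵀ = B⁻¹ := by simpa [IsHermitian, conjTranspose_eq_transpose_of_trivial] using hBi
  refine PosSemidef.of_dotProduct_mulVec_nonneg ?_ fun x => ?_
  · refine IsHermitian.sub ?_ hBi
    have := isHermitian_conjTranspose_mul_mul A⁻¹ hDh
    rwa [hAi.eq] at this
  set y := A⁻¹ *ᵥ x with hy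
  set z := B⁻¹ *ᵥ x with hz
  obtain ⟨i1, e1⟩ := aux_bilin μ v (fun ω => h ω ^ 2) hDint y y
  obtain ⟨i2, e2⟩ := aux_bilin μ v h hAint y z
  obtain ⟨i3, e3⟩ := aux_bilin μ v (fun _ => 1) (by simpa using hBint) z z
  rw [← hD] at e1
  rw [← hA] at e2
  simp only [one_mul] at e3 i3
  rw [← hB] at e3
  have tA : ∀ u w : Fin p → ℝ, (A⁻¹ *ᵥ u) ⬝ᵥ w = u ⬝ᵥ (A⁻¹ *ᵥ w) := fun u w => by
    rw [dotProduct_mulVec, ← mulVec_transpose, sA]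
  have f1 : y ⬝ᵥ (D *ᵥ y) = x ⬝ᵥ ((A⁻¹ * D * A⁻¹) *ᵥ x) := by
    rw [hy, tA, mulVec_mulVec, mulVec_mulVec, Matrix.mul_assoc]
  have f2 : y ⬝ᵥ (A *ᵥ z) = x ⬝ᵥ (B⁻¹ *ᵥ x) := by
    rw [hy, tA, mulVec_mulVec, Matrix.nonsing_inv_mul _ hAu, one_mulVec]
  have f3 : z ⬝ᵥ (B *ᵥ z) = x ⬝ᵥ (B⁻¹ *ᵥ x) := by
    rw [hz, mulVec_mulVec, Matrix.mul_nonsing_inv _ hBu, one_mulVec, dotProduct_comm]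
  have key : 0 ≤ ∫ ω, (h ω ^ 2 * ((y ⬝ᵥ v ω) * (y ⬝ᵥ v ω))
      - 2 * (h ω * ((y ⬝ᵥ v ω) * (z ⬝ᵥ v ω)))) + (z ⬝ᵥ v ω) * (z ⬝ᵥ v ω) ∂μ := by
    refine integral_nonneg fun ω => ?_
    have := sq_nonneg (h ω * (y ⬝ᵥ v ω) - z ⬝ᵥ v ω)
    simp only [Pi.zero_apply]
    nlinarith
  have i12 : Integrable (fun ω => h ω ^ 2 * ((y ⬝ᵥ v ω) * (y ⬝ᵥ v ω))
      - 2 * (h ω * ((y ⬝ᵥ v ω) * (z ⬝ᵥ v ω)))) μ := i1.sub (i2.const_mul 2)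
  rw [integral_add i12 i3, integral_sub i1 (i2.const_mul 2),
    integral_const_mul, ← e1, ← e2, ← e3, f1, f2, f3] at key
  rw [star_trivial, sub_mulVec, dotProduct_sub]
  linarith
end
end

section
/- Let v be a random vector in ℝ^p and h a random variable with h > 0 almost surely, such that E[v vᵀ], E[h v vᵀ] and E[h⁻¹ v vᵀ] exist (Bochner integrable) and A := E[h v vᵀ] and B := E[v vᵀ] are positive definite. Define the random vector f := √h · A⁻¹ v − h^{−1/2} · B⁻¹ v. Then E[f fᵀ] exists and E[f fᵀ] = B⁻¹ E[h⁻¹ v vᵀ] B⁻¹ − A⁻¹. -/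
open MeasureTheory ProbabilityTheory Filter Matrix

noncomputable section

theorem aux_quad {Ω : Type*} [MeasurableSpace Ω] (μ : Measure Ω)
    {p : ℕ} (v : Ω → Fin p → ℝ) (w : Ω → ℝ)
    (hint : ∀ i j, Integrable (fun ω => w ω * (v ω i * v ω j)) μ)
    (M N W : Matrix (Fin p) (Fin p) ℝ)
    (hW : W = Matrix.of fun i j => ∫ ω, w ω * (v ω i * v ω j) ∂μ) (i j : Fin p) :
    Integrable (fun ω => w ω * (M.mulVec (v ω) i * N.mulVec (v ω) j)) μ ∧
      ∫ ω, w ω * (M.mulVec (v ω) i * N.mulVec (v ω) j) ∂μ = (M * W * Nᵀ) i j := by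
  have e : (fun ω => w ω * (M.mulVec (v ω) i * N.mulVec (v ω) j)) =
      fun ω => ∑ l, ∑ k, (M i k * N j l) * (w ω * (v ω k * v ω l)) := by
    funext ω
    simp only [Matrix.mulVec, dotProduct]
    rw [Finset.sum_mul_sum, Finset.sum_comm, Finset.mul_sum]
    refine Finset.sum_congr rfl fun l _ => ?_
    rw [Finset.mul_sum]
    refine Finset.sum_congr rfl fun k _ => ?_
    ring
  have hi : ∀ l k, Integrable (fun ω => (M i k * N j l) * (w ω * (v ω k * v ω l))) μ :=
    fun l k => (hint k l).const_mul _
  rw [e]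
  refine ⟨integrable_finsetSum _ fun l _ => integrable_finsetSum _ fun k _ => hi l k, ?_⟩
  rw [integral_finsetSum _ fun l _ => integrable_finsetSum _ fun k _ => hi l k]
  simp only [Matrix.mul_apply, Matrix.transpose_apply]
  refine Finset.sum_congr rfl fun l _ => ?_
  rw [integral_finsetSum _ fun k _ => hi l k, Finset.sum_mul]
  refine Finset.sum_congr rfl fun k _ => ?_
  rw [integral_const_mul, hW, Matrix.of_apply]
  ring

/-- with `A := E[h v vᵀ]`, `B := E[v vᵀ]` positive definite and
`C := E[h⁻¹ v vᵀ]` existing (expectations entrywise), the random vector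
`f := √h · A⁻¹ v − h^{−1/2} · B⁻¹ v` satisfies: `E[f fᵀ]` exists (entrywise
integrable) and `E[f fᵀ] = B⁻¹ C B⁻¹ − A⁻¹`. -/
theorem exp_outer_f_eq
    {Ω : Type*} [MeasurableSpace Ω] (μ : Measure Ω) [IsProbabilityMeasure μ]
    {p : ℕ} (v : Ω → Fin p → ℝ) (h : Ω → ℝ)
    (hv : Measurable v) (hh : Measurable h)
    (hpos : ∀ᵐ ω ∂μ, 0 < h ω)
    (hBint : ∀ i j, Integrable (fun ω => v ω i * v ω j) μ)
    (hAint : ∀ i j, Integrable (fun ω => h ω * (v ω i * v ω j)) μ)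
    (hCint : ∀ i j, Integrable (fun ω => (h ω)⁻¹ * (v ω i * v ω j)) μ)
    (A B C : Matrix (Fin p) (Fin p) ℝ)
    (hA : A = Matrix.of fun i j => ∫ ω, h ω * (v ω i * v ω j) ∂μ)
    (hB : B = Matrix.of fun i j => ∫ ω, v ω i * v ω j ∂μ)
    (hC : C = Matrix.of fun i j => ∫ ω, (h ω)⁻¹ * (v ω i * v ω j) ∂μ)
    (hApd : A.PosDef) (hBpd : B.PosDef)
    (f : Ω → Fin p → ℝ)
    (hf : ∀ ω, f ω = Real.sqrt (h ω) • A⁻¹.mulVec (v ω)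
        - (Real.sqrt (h ω))⁻¹ • B⁻¹.mulVec (v ω)) :
    (∀ i j, Integrable (fun ω => f ω i * f ω j) μ) ∧
      (Matrix.of fun i j => ∫ ω, f ω i * f ω j ∂μ) = B⁻¹ * C * B⁻¹ - A⁻¹ := by
  have hAt : (A⁻¹)ᵀ = A⁻¹ := by
    have := hApd.isHermitian.inv
    simpa [Matrix.IsHermitian, Matrix.conjTranspose_eq_transpose_of_trivial] using this
  have hBt : (B⁻¹)ᵀ = B⁻¹ := by
    have := hBpd.isHermitian.inv
    simpa [Matrix.IsHermitian, Matrix.conjTranspose_eq_transpose_of_trivial] using this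
  have hAu : IsUnit A.det := (Matrix.isUnit_iff_isUnit_det A).1 hApd.isUnit
  have hBu : IsUnit B.det := (Matrix.isUnit_iff_isUnit_det B).1 hBpd.isUnit
  have hB1 : ∀ i j, Integrable (fun ω => (fun _ => (1 : ℝ)) ω * (v ω i * v ω j)) μ := by
    simpa using hBint
  have hB2 : B = Matrix.of fun i j => ∫ ω, (fun _ => (1 : ℝ)) ω * (v ω i * v ω j) ∂μ := by
    simpa using hB
  have key : ∀ i j, Integrable (fun ω => f ω i * f ω j) μ ∧
      ∫ ω, f ω i * f ω j ∂μ = (B⁻¹ * C * B⁻¹ - A⁻¹) i j := by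
    intro i j
    obtain ⟨a1, a2⟩ := aux_quad μ v h hAint A⁻¹ A⁻¹ A hA i j
    obtain ⟨b1, b2⟩ := aux_quad μ v _ hB1 A⁻¹ B⁻¹ B hB2 i j
    obtain ⟨c1, c2⟩ := aux_quad μ v _ hB1 B⁻¹ A⁻¹ B hB2 i j
    obtain ⟨d1, d2⟩ := aux_quad μ v (fun ω => (h ω)⁻¹) hCint B⁻¹ B⁻¹ C hC i j
    rw [hAt, Matrix.nonsing_inv_mul _ hAu, Matrix.one_mul] at a2
    rw [hBt, Matrix.mul_assoc, Matrix.mul_nonsing_inv _ hBu, Matrix.mul_one] at b2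
    rw [hAt, Matrix.nonsing_inv_mul _ hBu, Matrix.one_mul] at c2
    rw [hBt] at d2
    have e : (fun ω => f ω i * f ω j) =ᵐ[μ] fun ω =>
        h ω * (A⁻¹.mulVec (v ω) i * A⁻¹.mulVec (v ω) j)
        - (fun _ => (1 : ℝ)) ω * (A⁻¹.mulVec (v ω) i * B⁻¹.mulVec (v ω) j)
        - (fun _ => (1 : ℝ)) ω * (B⁻¹.mulVec (v ω) i * A⁻¹.mulVec (v ω) j)
        + (h ω)⁻¹ * (B⁻¹.mulVec (v ω) i * B⁻¹.mulVec (v ω) j) := by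
      filter_upwards [hpos] with ω hω
      have hs : 0 < Real.sqrt (h ω) := Real.sqrt_pos.2 hω
      have hq : h ω = Real.sqrt (h ω) * Real.sqrt (h ω) := (Real.mul_self_sqrt hω.le).symm
      rw [hf ω]
      simp only [Pi.sub_apply, Pi.smul_apply, smul_eq_mul]
      generalize Real.sqrt (h ω) = s at hs hq
      rw [hq]
      field_simp
      ring
    refine ⟨(((a1.sub b1).sub c1).add d1).congr e.symm, ?_⟩
    have t1 := integral_sub a1 b1
    have t2 := integral_sub (a1.sub b1) c1
    have t3 := integral_add ((a1.sub b1).sub c1) d1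
    simp only [Pi.sub_apply] at t1 t2 t3
    refine (integral_congr_ae e).trans (t3.trans ?_)
    rw [t2, t1, a2, b2, c2, d2, Matrix.sub_apply]
    ring
  refine ⟨fun i j => (key i j).1, ?_⟩
  ext i j
  exact (key i j).2
end
end
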